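/- arXiv:1711.04242 — 2 statements merged into one kernel-verified Lean document; each statement's English description precedes it below -/
import Mathlib

section
/- Let V be a subspace of ℝ^S for a finite set S, and let T ⊆ S. Then the orthogonal complement in ℝ^T of the restriction V∘T equals the contraction of the orthogonal complement: (V∘T)^⊥ = V^⊥ × T. -/
/-- The orthogonal complement of a subspace `V` of `ℝ^S` with respect to the
dot product `⟨x,y⟩ = ∑ e, x e * y e`. -/
def perpSub {S : Type*} [Fintype S] (V : Submodule ℝ (S → ℝ)) : Submodule ℝ (S → ℝ) where
  carrier := {y | ∀ x ∈ V, ∑ e, x e * y e = 0}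
  zero_mem' := by intro x _; simp
  add_mem' := by
    intro a b ha hb x hx
    simp only [Set.mem_setOf_eq] at ha hb
    simp [Pi.add_apply, mul_add, Finset.sum_add_distrib, ha x hx, hb x hx]
  smul_mem' := by
    intro c a ha x hx
    simp only [Set.mem_setOf_eq] at ha
    simp [Pi.smul_apply, smul_eq_mul, mul_left_comm, ← Finset.mul_sum, ha x hx]

/-- The restriction `V∘T` of a subspace `V ⊆ ℝ^S` to `T ⊆ S`:
all vectors `x|_T` for `x ∈ V`. -/
def restrictTo {S : Type*} (V : Submodule ℝ (S → ℝ)) (T : Set S) : Submodule ℝ (T → ℝ) :=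
  V.map (LinearMap.funLeft ℝ ℝ (Subtype.val : T → S))

/-- The subspace of vectors on `S` vanishing outside `T`. -/
def zeroOutside {S : Type*} (T : Set S) : Submodule ℝ (S → ℝ) where
  carrier := {x | ∀ e ∉ T, x e = 0}
  zero_mem' := by intro e _; rfl
  add_mem' := by
    intro a b ha hb e he
    simp [ha e he, hb e he]
  smul_mem' := by
    intro c a ha e he
    simp [ha e he]

/-- The contraction `V×T` of a subspace `V ⊆ ℝ^S` to `T ⊆ S`:
all vectors `x|_T` for `x ∈ V` with `x e = 0` for every `e ∉ T`. -/
def contractTo {S : Type*} (V : Submodule ℝ (S → ℝ)) (T : Set S) : Submodule ℝ (T → ℝ) :=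
  (V ⊓ zeroOutside T).map (LinearMap.funLeft ℝ ℝ (Subtype.val : T → S))

theorem sum_subtype_aux {S : Type*} [Fintype S] (T : Set S) [Fintype T] (f : S → ℝ)
    (hf : ∀ e ∉ T, f e = 0) : ∑ e : T, f e = ∑ e, f e := by
  classical
  rw [← Finset.sum_subset (Finset.subset_univ T.toFinset)
    (fun e _ he => hf e (by simpa using he))]
  exact (Finset.sum_subtype T.toFinset (fun e => by simp) f).symm

/-- `(V∘T)^⊥ = V^⊥ × T`: the orthogonal complement of the restriction equals
the contraction of the orthogonal complement. -/
theorem perp_restrict_eq_contract_perp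
    {S : Type*} [Fintype S] (V : Submodule ℝ (S → ℝ)) (T : Set S)
    [DecidablePred (· ∈ T)] :
    perpSub (restrictTo V T) = contractTo (perpSub V) T := by
  ext y
  constructor
  · intro hy
    have key : ∀ e : T, (fun e : S => if h : e ∈ T then y ⟨e, h⟩ else 0) e = y e := by
      intro e
      simp
    refine ⟨fun e => if h : e ∈ T then y ⟨e, h⟩ else 0, ⟨?_, ?_⟩, ?_⟩
    · intro x hx
      rw [← sum_subtype_aux T _ (fun e he => by simp [he])]
      have h := hy _ ⟨x, hx, rfl⟩
      rw [← h]
      refine Finset.sum_congr rfl fun e _ => ?_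
      simp [LinearMap.funLeft_apply]
    · intro e he
      simp [he]
    · ext e
      exact key e
  · rintro ⟨z, ⟨hz, hz0⟩, rfl⟩
    rintro _ ⟨x, hx, rfl⟩
    have h := hz x hx
    rw [← sum_subtype_aux T _ (fun e he => by rw [hz0 e he, mul_zero])] at h
    exact h
end

section
/- Let V be a subspace of ℝ^S for a finite set S, and let T ⊆ S. Then the orthogonal complement in ℝ^T of the contraction V×T equals the restriction of the orthogonal complement: (V×T)^⊥ = V^⊥ ∘ T. -/
/-- `(V×T)^⊥ = V^⊥ ∘ T`: the orthogonal complement of the contraction equals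
the restriction of the orthogonal complement. -/
theorem perp_contract_eq_restrict_perp
    {S : Type*} [Fintype S] (V : Submodule ℝ (S → ℝ)) (T : Set S)
    [DecidablePred (· ∈ T)] :
    perpSub (contractTo V T) = restrictTo (perpSub V) T := by
  classical
  have key : ∀ (x : S → ℝ) (y : T → ℝ), ∑ e : T, x e * y e =
      ∑ e : S, x e * (if h : e ∈ T then y ⟨e, h⟩ else 0) := by
    intro x y
    symm
    rw [← Fintype.sum_subtype_add_sum_subtype (fun e => e ∈ T)]
    have h1 : ∑ e : {e // ¬ e ∈ T}, x e * (if h : (e : S) ∈ T then y ⟨e, h⟩ else 0) = 0 :=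
      Finset.sum_eq_zero fun e _ => by simp [e.2]
    rw [h1, add_zero]
    refine Finset.sum_congr rfl fun e _ => ?_
    have := e.2
    simp [this]
  ext y
  constructor
  · intro hy
    -- the part of `x` outside `T`
    let p : (S → ℝ) →ₗ[ℝ] (S → ℝ) :=
      { toFun := fun x e => if e ∈ T then 0 else x e
        map_add' := by intro a b; ext e; by_cases h : e ∈ T <;> simp [h]
        map_smul' := by intro a b; ext e; by_cases h : e ∈ T <;> simp [h] }
    let f : (S → ℝ) →ₗ[ℝ] ℝ :=
      { toFun := fun x => ∑ e : T, x e * y e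
        map_add' := by intro a b; simp [add_mul, Finset.sum_add_distrib]
        map_smul' := by intro a b; simp [mul_assoc, Finset.mul_sum] }
    have hf : f ∘ₗ V.subtype ∈ LinearMap.range (p ∘ₗ V.subtype).dualMap := by
      rw [LinearMap.range_dualMap_eq_dualAnnihilator_ker, Submodule.mem_dualAnnihilator]
      intro x hx
      refine hy (fun e => x.1 e) ⟨x.1, ⟨x.2, ?_⟩, rfl⟩
      intro e he
      have h2 : p x.1 = 0 := hx
      have := congrFun h2 e
      simpa [p, he] using this
    obtain ⟨g, hg⟩ := hf
    refine ⟨fun e => if h : e ∈ T then y ⟨e, h⟩ else - g (Pi.single e 1), ?_, ?_⟩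
    · intro x hx
      have h3 : g (p x) = ∑ e : T, x e * y e := LinearMap.congr_fun hg ⟨x, hx⟩
      rw [key, LinearMap.pi_apply_eq_sum_univ g (p x)] at h3
      have h4 : ∀ e, x e * (if h : e ∈ T then y ⟨e, h⟩ else - g (Pi.single e 1)) =
          x e * (if h : e ∈ T then y ⟨e, h⟩ else 0) -
            p x e • g (fun j => if e = j then 1 else 0) := by
        intro e
        have : (Pi.single e 1 : S → ℝ) = fun j => if e = j then 1 else 0 := by
          ext j; simp [Pi.single_apply, eq_comm]
        by_cases h : e ∈ T <;> simp [p, h, this]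
      simp only [h4, Finset.sum_sub_distrib]
      rw [h3, sub_self]
    · ext e
      simp [LinearMap.funLeft_apply]
  · rintro ⟨z, hz, rfl⟩ _ ⟨x, ⟨hx, hx0⟩, rfl⟩
    have := key x (fun e => z e)
    simp only [LinearMap.funLeft_apply]
    rw [this, ← hz x hx]
    refine Finset.sum_congr rfl fun e _ => ?_
    by_cases h : e ∈ T
    · simp [h]
    · simp [hx0 e h]
end
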